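/- arXiv:2002.06613 — 2 statements merged into one kernel-verified Lean document; each statement's English description precedes it below -/
import Mathlib

section
/- Let Ă ∈ ℝ^{N×N}, B̆ ∈ ℝ^{N×M} with (Ă, B̆) controllable, let X_0 ∈ ℝ^N and a fixed sequence η_0, …, η_{ℓ-1} ∈ ℝ^N be given, and suppose ℓ > (1/2)MN² + (1/2)MN + M + 1. For inputs U_0, …, U_{ℓ-1} ∈ ℝ^M define X_{t+1} = Ă X_t + B̆ U_t + η_t for 0 ≤ t ≤ ℓ-1, and let D = [[X_{ℓ-1}, …, X_0]; [U_{ℓ-1}, …, U_0]] ∈ ℝ^{(N+M)×ℓ}. Then the set {(U_0^T, …, U_{ℓ-1}^T)^T ∈ ℝ^{Mℓ} : rank(D) < N+M} has Lebesgue measure zero in ℝ^{Mℓ}. -/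
open Matrix MeasureTheory

/-- The second-moment trajectory `X_{t+1} = Ă X_t + B̆ U_t + η_t` started at `X₀`. -/
noncomputable def trajEta {N M : ℕ} (Ab : Matrix (Fin N) (Fin N) ℝ)
    (Bb : Matrix (Fin N) (Fin M) ℝ) (X0 : Fin N → ℝ) (U : ℕ → Fin M → ℝ)
    (η : ℕ → Fin N → ℝ) : ℕ → Fin N → ℝ
  | 0 => X0
  | t + 1 => Ab *ᵥ trajEta Ab Bb X0 U η t + Bb *ᵥ U t + η t

/-- The controllability matrix `[B̆, ĂB̆, …, Ă^{N-1} B̆] ∈ ℝ^{N × NM}`. -/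
noncomputable def ctrbMat {N M : ℕ} (Ab : Matrix (Fin N) (Fin N) ℝ)
    (Bb : Matrix (Fin N) (Fin M) ℝ) : Matrix (Fin N) (Fin N × Fin M) ℝ :=
  Matrix.of fun i kj => (Ab ^ (kj.1 : ℕ) * Bb) i kj.2

/-- `(Ă, B̆)` is controllable if the controllability matrix has rank `N`. -/
def Controllable {N M : ℕ} (Ab : Matrix (Fin N) (Fin N) ℝ)
    (Bb : Matrix (Fin N) (Fin M) ℝ) : Prop :=
  (ctrbMat Ab Bb).rank = N

/-- The data matrix `D = [[X_{ℓ-1}, …, X_0]; [U_{ℓ-1}, …, U_0]] ∈ ℝ^{(N+M) × ℓ}` regarded as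
a function of the inputs `U_0, …, U_{ℓ-1}`: its column `c` (time index `ℓ - 1 - c = c.rev`)
stacks `X_{ℓ-1-c}` over `U_{ℓ-1-c}`. -/
noncomputable def Dmat {N M ℓ : ℕ} (Ab : Matrix (Fin N) (Fin N) ℝ)
    (Bb : Matrix (Fin N) (Fin M) ℝ) (X0 : Fin N → ℝ) (η : Fin ℓ → Fin N → ℝ)
    (U : Fin ℓ → Fin M → ℝ) : Matrix (Fin N ⊕ Fin M) (Fin ℓ) ℝ :=
  Matrix.of fun r c =>
    Sum.elim
      (fun i => trajEta Ab Bb X0 (fun t => if h : t < ℓ then U ⟨t, h⟩ else 0)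
        (fun t => if h : t < ℓ then η ⟨t, h⟩ else 0) c.rev i)
      (fun j => U c.rev j) r

/-! By Fubini along lines `U + s • V`, full row rank of the data matrix for almost every `U` follows
from full row rank of its linear part (`X₀ = 0`, `η = 0`) at a single input sequence `V`. Such a `V`
is chosen greedily, one input at a time, so that the vectors `(X_t, U_t)` stay linearly independent.
Suppose the span `S` of `(X_s, U_s)`, `s < t`, contains `(X_t, u)` for every input `u`. Then `S`
contains `0 × ℝ^M`, so `S = P × ℝ^M`, where `P` is the span of `X_0, …, X_t`. Every vector
`Ă X_s + B̆ U_s = X_{s+1}` with `s < t` lies in `P`, hence `P` is `Ă`-invariant and contains the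
range of `B̆`. By controllability `P` is everything, and so is `S`. Thus `N + M` columns suffice. -/

section LinearSystem

variable {K E F : Type*} [Ring K] [AddCommGroup E] [Module K E] [AddCommGroup F]
  [Module K F]

/-- Coordinate-free controllability of the system `x ↦ A x + B u`: no proper `A`-invariant subspace
contains the range of `B`. For matrices this is implied by the rank condition `Controllable`, see
`Controllable.isControllable`. -/
def IsControllable (A : E →ₗ[K] E) (B : F →ₗ[K] E) : Prop :=
  ∀ P ∈ Module.End.invtSubmodule A, LinearMap.range B ≤ P → P = ⊤

/-- The states `x (t + 1) = A (x t) + B (u t)` of a linear system driven by the inputs `u`. -/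
def stateSeq (A : E →ₗ[K] E) (B : F →ₗ[K] E) (x₀ : E) (u : ℕ → F) : ℕ → E
  | 0 => x₀
  | t + 1 => A (stateSeq A B x₀ u t) + B (u t)

/-- The state-input pairs `(x t, u t)` of a linear system, the columns of its data matrix. -/
def stateInputSeq (A : E →ₗ[K] E) (B : F →ₗ[K] E) (x₀ : E) (u : ℕ → F) (t : ℕ) : E × F :=
  (stateSeq A B x₀ u t, u t)

variable {A : E →ₗ[K] E} {B : F →ₗ[K] E} {x₀ : E}

theorem stateSeq_congr {u v : ℕ → F} {t : ℕ} (h : ∀ s < t, u s = v s) :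
    stateSeq A B x₀ u t = stateSeq A B x₀ v t := by
  induction t with
  | zero => rfl
  | succ t ih =>
    simp only [stateSeq, ih fun s hs => h s (hs.trans t.lt_succ_self), h t t.lt_succ_self]

theorem stateInputSeq_update_of_lt (u : ℕ → F) {s t : ℕ} (hst : s < t) (w : F) :
    stateInputSeq A B x₀ (Function.update u t w) s = stateInputSeq A B x₀ u s :=
  Prod.ext (stateSeq_congr fun _ hr => Function.update_of_ne (hr.trans hst).ne _ _)
    (Function.update_of_ne hst.ne _ _)

theorem stateInputSeq_update_self (u : ℕ → F) (t : ℕ) (w : F) :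
    stateInputSeq A B x₀ (Function.update u t w) t = (stateSeq A B x₀ u t, w) :=
  Prod.ext (stateSeq_congr fun _ hr => Function.update_of_ne hr.ne _ _)
    (Function.update_self _ _ _)

theorem IsControllable.exists_prodMk_notMem (hAB : IsControllable A B) {S : Submodule K (E × F)}
    (hS : S ≠ ⊤) {x : E}
    (hx : S.map (A.coprod B) ≤ S.map (LinearMap.fst K E F) ⊔ Submodule.span K {x}) :
    ∃ w, (x, w) ∉ S := by
  by_contra! hxS
  have inr_mem (w : F) : ((0 : E), w) ∈ S := by simpa using S.sub_mem (hxS w) (hxS 0)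
  set P : Submodule K E := S.map (LinearMap.fst K E F)
  have inl_mem {p : E} (hp : p ∈ P) : (p, (0 : F)) ∈ S := by
    obtain ⟨⟨p, w⟩, hpw, rfl⟩ := hp
    simpa using S.sub_mem hpw (inr_mem w)
  have step_mem {z : E × F} (hz : z ∈ S) : A z.1 + B z.2 ∈ P := by
    have hxP : Submodule.span K {x} ≤ P :=
      (Submodule.span_singleton_le_iff_mem x P).2 ⟨(x, 0), hxS 0, rfl⟩
    simpa [sup_eq_left.2 hxP] using hx (Submodule.mem_map_of_mem hz)
  have P_eq_top : P = ⊤ := by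
    refine hAB P (fun p hp => by simpa using step_mem (inl_mem hp)) ?_
    rintro _ ⟨w, rfl⟩
    simpa using step_mem (inr_mem w)
  refine hS (eq_top_iff.2 fun z _ => ?_)
  simpa using S.add_mem (inl_mem (P_eq_top ▸ Submodule.mem_top : z.1 ∈ P)) (inr_mem z.2)

theorem map_coprod_span_stateInputSeq_le (u : ℕ → F) (t : ℕ) :
    (Submodule.span K (Set.range fun s : Fin t => stateInputSeq A B x₀ u s)).map (A.coprod B) ≤
      (Submodule.span K (Set.range fun s : Fin t => stateInputSeq A B x₀ u s)).map
        (LinearMap.fst K E F) ⊔ Submodule.span K {stateSeq A B x₀ u t} := by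
  rw [Submodule.map_le_iff_le_comap, Submodule.span_le]
  rintro _ ⟨s, rfl⟩
  obtain hlt | heq : (s : ℕ) + 1 < t ∨ (s : ℕ) + 1 = t := by omega
  · exact Submodule.mem_sup_left
      ⟨_, Submodule.subset_span (Set.mem_range_self (⟨s + 1, hlt⟩ : Fin t)), rfl⟩
  · exact Submodule.mem_sup_right (Submodule.subset_span (congrArg (stateSeq A B x₀ u) heq))

end LinearSystem

section GreedyInput

variable {K E F : Type*} [DivisionRing K] [AddCommGroup E] [Module K E] [AddCommGroup F]
  [Module K F] {A : E →ₗ[K] E} {B : F →ₗ[K] E}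

theorem IsControllable.exists_linearIndependent_stateInputSeq (hAB : IsControllable A B) (x₀ : E)
    {t : ℕ} (ht : t ≤ Module.finrank K (E × F)) :
    ∃ u : ℕ → F, LinearIndependent K fun s : Fin t => stateInputSeq A B x₀ u s := by
  induction t with
  | zero => exact ⟨0, linearIndependent_empty_type⟩
  | succ t ih =>
    obtain ⟨u, hu⟩ := ih (t.le_succ.trans ht)
    have span_ne_top :
        Submodule.span K (Set.range fun s : Fin t => stateInputSeq A B x₀ u s) ≠ ⊤ := by
      intro h
      have := finrank_span_eq_card hu
      rw [h, finrank_top, Fintype.card_fin] at this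
      omega
    obtain ⟨w, hw⟩ :=
      hAB.exists_prodMk_notMem span_ne_top (map_coprod_span_stateInputSeq_le u t)
    refine ⟨Function.update u t w, linearIndependent_finSucc'.2 ?_⟩
    have init_eq : (Fin.init fun s : Fin (t + 1) =>
        stateInputSeq A B x₀ (Function.update u t w) s) =
          fun s : Fin t => stateInputSeq A B x₀ u s :=
      funext fun s => stateInputSeq_update_of_lt u s.2 w
    rw [init_eq, Fin.val_last, stateInputSeq_update_self]
    exact ⟨hu, hw⟩

theorem IsControllable.exists_span_stateInputSeq_eq_top [FiniteDimensional K E]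
    [FiniteDimensional K F] (hAB : IsControllable A B) (x₀ : E) {ℓ : ℕ}
    (hℓ : Module.finrank K (E × F) ≤ ℓ) :
    ∃ u : ℕ → F,
      Submodule.span K (Set.range fun t : Fin ℓ => stateInputSeq A B x₀ u t) = ⊤ := by
  obtain ⟨u, hu⟩ := hAB.exists_linearIndependent_stateInputSeq x₀ le_rfl
  refine ⟨u, eq_top_iff.2 ?_⟩
  rw [← hu.span_eq_top_of_card_eq_finrank' (Fintype.card_fin _)]
  refine Submodule.span_mono ?_
  rintro _ ⟨t, rfl⟩
  exact ⟨Fin.castLE hℓ t, rfl⟩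

end GreedyInput

section GenericRank

variable {m n : Type*} [Fintype m] [Fintype n]

theorem exists_mul_eq_one_of_rank_eq_card {K : Type*} [Field K] [DecidableEq m]
    {C : Matrix m n K} (hC : C.rank = Fintype.card m) :
    ∃ R : Matrix n m K, C * R = 1 := by
  rw [← Matrix.mulVec_surjective_iff_exists_right_inverse]
  exact LinearMap.range_eq_top.1 <| Submodule.eq_top_of_finrank_eq <|
    hC.trans (Module.finrank_fintype_fun_eq_card K).symm

variable {K : Type*} [CommRing K] [IsDomain K]

theorem rank_eq_card_of_det_mul_ne_zero [DecidableEq m] {C : Matrix m n K}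
    {R : Matrix n m K} (h : (C * R).det ≠ 0) : C.rank = Fintype.card m :=
  C.rank_le_card_height.antisymm <|
    (Matrix.rank_of_det_ne_zero h).symm.trans_le (Matrix.rank_mul_le_left C R)

theorem finite_setOf_det_add_smul_one_eq_zero [DecidableEq m] (G : Matrix m m K) :
    {s : K | (G + s • (1 : Matrix m m K)).det = 0}.Finite := by
  convert Polynomial.finite_setOfPred_isRoot (-G).charpoly_monic.ne_zero using 3 with s
  rw [Polynomial.IsRoot, Matrix.eval_charpoly, sub_neg_eq_add, add_comm,
    Matrix.smul_one_eq_diagonal, Matrix.scalar_apply]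

theorem ae_rank_eq_card_of_forall_add_smul {H : Type*} [NormedAddCommGroup H] [NormedSpace ℝ H]
    [MeasurableSpace H] [BorelSpace H] [LocallyCompactSpace H] (μ : Measure H) [μ.IsAddHaarMeasure]
    {f : H → Matrix m n ℝ} (hf : Continuous f) {v : H} {C : Matrix m n ℝ}
    (hfC : ∀ x (s : ℝ), f (x + s • v) = f x + s • C) (hC : C.rank = Fintype.card m) :
    ∀ᵐ x ∂μ, (f x).rank = Fintype.card m := by
  classical
  obtain ⟨R, hR⟩ := exists_mul_eq_one_of_rank_eq_card hC
  have isOpen_det_ne_zero : IsOpen {x | (f x * R).det ≠ 0} :=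
    isOpen_ne_fun (hf.matrix_mul continuous_const).matrix_det continuous_const
  have ae_det_ne_zero : ∀ᵐ x ∂μ, x ∈ {x | (f x * R).det ≠ 0} := by
    refine ae_mem_of_ae_add_linearMap_mem (LinearMap.toSpanSingleton ℝ H v) volume μ
      isOpen_det_ne_zero.measurableSet fun x => ?_
    filter_upwards [(finite_setOf_det_add_smul_one_eq_zero (f x * R)).countable.ae_notMem volume]
      with s hs
    simpa [hfC, Matrix.add_mul, hR] using hs
  exact ae_det_ne_zero.mono fun _ => rank_eq_card_of_det_mul_ne_zero

end GenericRank

section DataMatrix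

variable {N M ℓ : ℕ} {Ab : Matrix (Fin N) (Fin N) ℝ} {Bb : Matrix (Fin N) (Fin M) ℝ}

theorem Controllable.le_mul (h : Controllable Ab Bb) : N ≤ N * M := by
  simpa [h.symm] using (ctrbMat Ab Bb).rank_le_card_width

theorem Controllable.isControllable (h : Controllable Ab Bb) :
    IsControllable Ab.mulVecLin Bb.mulVecLin := by
  intro P hAP hBP
  have pow_mulVec_mem (k : ℕ) {x : Fin N → ℝ} (hx : x ∈ P) : Ab ^ k *ᵥ x ∈ P := by
    induction k with
    | zero => simpa using hx
    | succ k ih =>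
      rw [pow_succ', ← Matrix.mulVec_mulVec]
      exact hAP ih
  have span_cols_le : Submodule.span ℝ (Set.range (ctrbMat Ab Bb).col) ≤ P := by
    rw [Submodule.span_le]
    rintro _ ⟨⟨k, j⟩, rfl⟩
    have col_eq : (ctrbMat Ab Bb).col (k, j) = Ab ^ (k : ℕ) *ᵥ Bb *ᵥ Pi.single j 1 := by
      rw [Matrix.mulVec_mulVec, Matrix.mulVec_single_one]
      rfl
    rw [col_eq]
    exact pow_mulVec_mem k (hBP ⟨_, rfl⟩)
  refine top_le_iff.1 (le_trans (ge_of_eq ?_) span_cols_le)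
  refine Submodule.eq_top_of_finrank_eq ?_
  rw [← Matrix.rank_eq_finrank_span_cols, Module.finrank_fin_fun]
  exact h

variable (Ab Bb)

theorem trajEta_add_smul (X0 Y0 : Fin N → ℝ) (U V : ℕ → Fin M → ℝ) (η ζ : ℕ → Fin N → ℝ) (s : ℝ)
    (t : ℕ) :
    trajEta Ab Bb (X0 + s • Y0) (U + s • V) (η + s • ζ) t =
      trajEta Ab Bb X0 U η t + s • trajEta Ab Bb Y0 V ζ t := by
  induction t with
  | zero => rfl
  | succ t ih =>
    simp only [trajEta, ih, Pi.add_apply, Pi.smul_apply, Matrix.mulVec_add, Matrix.mulVec_smul,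
      smul_add]
    abel

theorem trajEta_zero_eq_stateSeq (X0 : Fin N → ℝ) (U : ℕ → Fin M → ℝ) (t : ℕ) :
    trajEta Ab Bb X0 U 0 t = stateSeq Ab.mulVecLin Bb.mulVecLin X0 U t := by
  induction t with
  | zero => rfl
  | succ t ih => simp [trajEta, stateSeq, ih]

theorem continuous_trajEta (X0 : Fin N → ℝ) (η : ℕ → Fin N → ℝ) (t : ℕ) :
    Continuous fun U : ℕ → Fin M → ℝ => trajEta Ab Bb X0 U η t := by
  induction t with
  | zero => exact continuous_const
  | succ t ih =>
    exact ((continuous_const.matrix_mulVec ih).add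
      (continuous_const.matrix_mulVec (continuous_apply t))).add continuous_const

theorem Dmat_add_smul (X0 Y0 : Fin N → ℝ) (η ζ : Fin ℓ → Fin N → ℝ) (U V : Fin ℓ → Fin M → ℝ)
    (s : ℝ) :
    Dmat Ab Bb (X0 + s • Y0) (η + s • ζ) (U + s • V) =
      Dmat Ab Bb X0 η U + s • Dmat Ab Bb Y0 ζ V := by
  have extend_add_smul {d : ℕ} (P Q : Fin ℓ → Fin d → ℝ) :
      (fun t => if h : t < ℓ then (P + s • Q) ⟨t, h⟩ else 0) =
        (fun t => if h : t < ℓ then P ⟨t, h⟩ else 0) +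
          s • fun t => if h : t < ℓ then Q ⟨t, h⟩ else 0 := by
    ext t
    by_cases h : t < ℓ <;> simp [h]
  ext (i | j) c
  · simp only [Dmat, extend_add_smul, trajEta_add_smul]
    rfl
  · rfl

theorem continuous_Dmat (X0 : Fin N → ℝ) (η : Fin ℓ → Fin N → ℝ) :
    Continuous fun U : Fin ℓ → Fin M → ℝ => Dmat Ab Bb X0 η U := by
  have continuous_extend : Continuous fun (U : Fin ℓ → Fin M → ℝ) (t : ℕ) =>
      if h : t < ℓ then U ⟨t, h⟩ else 0 :=
    continuous_pi fun t => by split_ifs <;> fun_prop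
  refine continuous_matrix ?_
  rintro (i | j) c
  · exact (continuous_apply i).comp ((continuous_trajEta Ab Bb X0 _ c.rev).comp continuous_extend)
  · exact (continuous_apply j).comp (continuous_apply c.rev)

theorem Dmat_zero_col (X0 : Fin N → ℝ) (U : ℕ → Fin M → ℝ) (c : Fin ℓ) :
    (Dmat Ab Bb X0 0 fun t => U t).col c =
      (LinearEquiv.sumArrowLequivProdArrow (Fin N) (Fin M) ℝ ℝ).symm
        (stateInputSeq Ab.mulVecLin Bb.mulVecLin X0 U c.rev) := by
  have extend_zero :
      (fun t => if h : t < ℓ then (0 : Fin ℓ → Fin N → ℝ) ⟨t, h⟩ else 0) = 0 := by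
    ext t
    simp
  have stateSeq_extend : stateSeq Ab.mulVecLin Bb.mulVecLin X0
      (fun t => if _ : t < ℓ then U t else 0) c.rev =
        stateSeq Ab.mulVecLin Bb.mulVecLin X0 U c.rev :=
    stateSeq_congr fun s hs => dif_pos (hs.trans c.rev.2)
  ext (i | j)
  · simp only [Matrix.col_apply, Dmat, Matrix.of_apply, Sum.elim_inl, extend_zero,
      trajEta_zero_eq_stateSeq, stateSeq_extend]
    rfl
  · rfl

variable {Ab Bb}

theorem Controllable.exists_rank_Dmat_zero_eq (h : Controllable Ab Bb) (X0 : Fin N → ℝ)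
    (hℓ : N + M ≤ ℓ) : ∃ V : Fin ℓ → Fin M → ℝ, (Dmat Ab Bb X0 0 V).rank = N + M := by
  obtain ⟨u, hu⟩ := h.isControllable.exists_span_stateInputSeq_eq_top X0 (ℓ := ℓ)
    (by simpa using hℓ)
  let e := (LinearEquiv.sumArrowLequivProdArrow (Fin N) (Fin M) ℝ ℝ).symm
  let z (t : Fin ℓ) := stateInputSeq Ab.mulVecLin Bb.mulVecLin X0 u t
  have range_col : Set.range (Dmat Ab Bb X0 0 fun t : Fin ℓ => u t).col =
      e.toLinearMap '' Set.range z := by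
    rw [← Set.range_comp, ← Fin.rev_surjective.range_comp (e.toLinearMap ∘ z)]
    exact congrArg Set.range (funext fun c => Dmat_zero_col Ab Bb X0 u c)
  refine ⟨fun t => u t, ?_⟩
  rw [Matrix.rank_eq_finrank_span_cols, range_col, ← Submodule.map_span, hu, Submodule.map_top,
    LinearEquiv.range]
  simp

theorem Controllable.ae_rank_Dmat_eq (h : Controllable Ab Bb) (X0 : Fin N → ℝ)
    (η : Fin ℓ → Fin N → ℝ) (hℓ : N + M ≤ ℓ) :
    ∀ᵐ U : Fin ℓ → Fin M → ℝ, (Dmat Ab Bb X0 η U).rank = N + M := by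
  obtain ⟨V, hV⟩ := h.exists_rank_Dmat_zero_eq 0 hℓ
  simpa using ae_rank_eq_card_of_forall_add_smul volume (continuous_Dmat Ab Bb X0 η)
    (fun U s => by simpa using Dmat_add_smul Ab Bb X0 0 η 0 U V s) (by simpa using hV)

end DataMatrix

theorem Dmat_rank_deficient_null_general {N M ℓ : ℕ} (Ab : Matrix (Fin N) (Fin N) ℝ)
    (Bb : Matrix (Fin N) (Fin M) ℝ) (X0 : Fin N → ℝ) (η : Fin ℓ → Fin N → ℝ)
    (hctrb : Controllable Ab Bb) (hℓ : N + M ≤ ℓ) :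
    volume {U : Fin ℓ → Fin M → ℝ | (Dmat Ab Bb X0 η U).rank < N + M} = 0 :=
  measure_mono_null (fun _ hU => ne_of_lt hU) (hctrb.ae_rank_Dmat_eq X0 η hℓ)

/-- If `(Ă, B̆)` is controllable, the offset sequence `η_0, …, η_{ℓ-1}` is fixed, and
`ℓ > (1/2)MN² + (1/2)MN + M + 1` (stated as `2ℓ > MN² + MN + 2M + 2`), then the set of
input sequences `(U_0, …, U_{ℓ-1}) ∈ ℝ^{Mℓ}` for which `D` fails to have full row rank
`N + M` has Lebesgue measure zero. -/
theorem Dmat_rank_deficient_null {N M ℓ : ℕ} (Ab : Matrix (Fin N) (Fin N) ℝ)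
    (Bb : Matrix (Fin N) (Fin M) ℝ) (X0 : Fin N → ℝ) (η : Fin ℓ → Fin N → ℝ)
    (hctrb : Controllable Ab Bb)
    (hℓ : 2 * ℓ > M * N ^ 2 + M * N + 2 * M + 2) :
    volume {U : Fin ℓ → Fin M → ℝ | (Dmat Ab Bb X0 η U).rank < N + M} = 0 := by
  have le_mul := hctrb.le_mul
  exact Dmat_rank_deficient_null_general Ab Bb X0 η hctrb (by nlinarith [two_mul_le_add_sq N 1])
end

section
/- Let N = n(n+1)/2 and M = m(m+1)/2, let Ă ∈ ℝ^{N×N}, B̆ ∈ ℝ^{N×M} with (Ă, B̆) controllable, let X_0 ∈ ℝ^N and a fixed sequence η_0, …, η_{ℓ-1} ∈ ℝ^N be given, and suppose ℓ ≥ (1/2)m²n⁴ + (1/2)m²n² + m² + 1 and ℓ > (1/2)MN² + (1/2)MN + M + 1. Let U_0, …, U_{ℓ-1} be random vectors in ℝ^M whose joint law on ℝ^{Mℓ} is absolutely continuous with respect to Lebesgue measure (as holds when the U_t are generated independently from non-degenerate distributions with densities, e.g., vectorized non-degenerate Wishart matrices). Define X_{t+1} = Ă X_t + B̆ U_t + η_t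 for 0 ≤ t ≤ ℓ-1 and D = [[X_{ℓ-1}, …, X_0]; [U_{ℓ-1}, …, U_0]] ∈ ℝ^{(N+M)×ℓ}. Then with probability one D has full row rank N+M, and consequently D D^T is invertible with probability one. -/
open Matrix MeasureTheory

/-!
The entries of `D` are polynomial in the inputs, so the zero set of `det (D Dᵀ)` is Lebesgue-null
as soon as one choice of inputs gives `D` full row rank, and `ℓ ≥ N + M` columns already suffice
for this. Since `D` is linear in `(X₀, η, U)`, replacing `U` by `c⁻¹ U` with `c` small reduces the
search to `X₀ = 0`, `η = 0`. There a greedy choice of inputs makes every new column `(X_t, U_t)`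
independent of the previous ones: take `U_t = 0` as long as the state enlarges the span; once it
does not, inject a new input direction; when no such direction is left, the states already spanned
form an `Ă`-invariant subspace containing the range of `B̆`, hence everything by controllability.
-/

section Genericity

variable {E F : Type*} [NormedAddCommGroup E] [NormedSpace ℝ E] [FiniteDimensional ℝ E]
  [MeasurableSpace E] [BorelSpace E] [NormedAddCommGroup F] [NormedSpace ℝ F]

-- On every line through `x₀` the zeros of `f` are isolated; by Fubini, for almost every `t` the
-- dilate `x ↦ f (x₀ + t • x)` is then almost everywhere nonzero, and one `t ≠ 0` is enough.
theorem ae_ne_zero_of_analyticOnNhd (μ : Measure E) [μ.IsAddHaarMeasure] {f : E → F}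
    (hf : AnalyticOnNhd ℝ f Set.univ) {x₀ : E} (hx₀ : f x₀ ≠ 0) : ∀ᵐ x ∂μ, f x ≠ 0 := by
  have line_ne_zero (x : E) : ∀ᵐ t : ℝ, f (x₀ + t • x) ≠ 0 := by
    have hline : AnalyticOnNhd ℝ (fun t : ℝ => f (x₀ + t • x)) Set.univ := fun t _ =>
      (hf (x₀ + t • x) trivial).fun_comp (f := fun t : ℝ => x₀ + t • x) (by fun_prop)
    have hcodiscrete := hline.preimage_zero_mem_codiscrete (x := 0) (by simpa using hx₀)
    have hae := ae_restrict_le_codiscreteWithin (μ := volume) MeasurableSet.univ hcodiscrete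
    rwa [Measure.restrict_univ] at hae
  have hmeas : MeasurableSet {p : E × ℝ | f (x₀ + p.2 • p.1) ≠ 0} :=
    (isOpen_ne_fun (hf.continuous.comp (by fun_prop)) continuous_const).measurableSet
  have dilate_ne_zero : ∀ᵐ t : ℝ, ∀ᵐ x ∂μ, f (x₀ + t • x) ≠ 0 :=
    (Measure.ae_ae_comm hmeas).1 (.of_forall line_ne_zero)
  obtain ⟨t, ht, ht0⟩ := (dilate_ne_zero.and (Measure.ae_ne volume 0)).exists
  have hundilate := (Measure.quasiMeasurePreserving_smul μ (inv_ne_zero ht0)).comp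
    (quasiMeasurePreserving_add_left μ (-x₀))
  filter_upwards [hundilate.ae ht] with x hx
  simpa [smul_smul, ht0] using hx

end Genericity

section Gram

open scoped Topology

variable {m n : Type*} [Fintype m] [Fintype n] [DecidableEq m]

theorem rank_eq_card_iff_isUnit {K : Type*} [Field K] (A : Matrix m m K) :
    A.rank = Fintype.card m ↔ IsUnit A := by
  refine ⟨fun h => ?_, rank_of_isUnit A⟩
  rw [← linearIndependent_cols_iff_isUnit, linearIndependent_iff_card_eq_finrank_span,
    Set.finrank, ← rank_eq_finrank_span_cols, h]

theorem rank_eq_card_iff_det_mul_transpose_ne_zero {K : Type*} [Field K] [LinearOrder K]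
    [IsStrictOrderedRing K] (D : Matrix m n K) :
    D.rank = Fintype.card m ↔ (D * Dᵀ).det ≠ 0 := by
  rw [← rank_self_mul_transpose, rank_eq_card_iff_isUnit, isUnit_iff_isUnit_det, isUnit_iff_ne_zero]

theorem analyticOnNhd_det_mul_transpose {V : Type*} [NormedAddCommGroup V] [NormedSpace ℝ V]
    [FiniteDimensional ℝ V] (L : V →ₗ[ℝ] Matrix m n ℝ) :
    AnalyticOnNhd ℝ (fun v => (L v * (L v)ᵀ).det) Set.univ := by
  have hentry (i : m) (j : n) : AnalyticOnNhd ℝ (fun v => L v i j) Set.univ :=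
    (entryLinearMap ℝ ℝ i j ∘ₗ L).toContinuousLinearMap.analyticOnNhd _
  simp only [det_apply', mul_apply, transpose_apply]
  exact Finset.analyticOnNhd_fun_sum _ fun σ _ => analyticOnNhd_const.mul <|
    Finset.analyticOnNhd_fun_prod _ fun i _ =>
      Finset.analyticOnNhd_fun_sum _ fun j _ => (hentry _ j).mul (hentry _ j)

theorem exists_det_mul_transpose_ne_zero_of_zero_fst {V W : Type*}
    [NormedAddCommGroup V] [NormedSpace ℝ V] [FiniteDimensional ℝ V]
    [NormedAddCommGroup W] [NormedSpace ℝ W] [FiniteDimensional ℝ W]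
    (L : V × W →ₗ[ℝ] Matrix m n ℝ) (v : V) {w : W} (hw : (L (0, w) * (L (0, w))ᵀ).det ≠ 0) :
    ∃ w', (L (v, w') * (L (v, w'))ᵀ).det ≠ 0 := by
  have hcont : Continuous fun c : ℝ => (L (c • v, w) * (L (c • v, w))ᵀ).det :=
    (analyticOnNhd_det_mul_transpose L).continuous.comp (f := fun c => (c • v, w)) (by fun_prop)
  have hsmall : ∀ᶠ c in 𝓝[≠] (0 : ℝ), (L (c • v, w) * (L (c • v, w))ᵀ).det ≠ 0 :=
    (hcont.continuousAt.eventually_ne (by simpa using hw)).filter_mono nhdsWithin_le_nhds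
  obtain ⟨c, hc, hc0⟩ := (hsmall.and self_mem_nhdsWithin).exists
  have hscale : L (c • v, w) = c • L (v, c⁻¹ • w) := by
    rw [← map_smul, Prod.smul_mk, smul_inv_smul₀ hc0]
  refine ⟨c⁻¹ • w, fun hdet => hc ?_⟩
  simp only [hscale, transpose_smul, smul_mul, Matrix.mul_smul, det_smul, hdet, mul_zero]

end Gram

section GreedyInputs

variable {K E F : Type*} [Field K] [AddCommGroup E] [Module K E] [AddCommGroup F] [Module K F]

/-- Coordinate-free controllability of the pair `(A, B)`: no proper `A`-invariant subspace
contains the range of `B`. -/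
def IsControllablePair (A : Module.End K E) (B : F →ₗ[K] E) : Prop :=
  ∀ W ∈ A.invtSubmodule, LinearMap.range B ≤ W → W = ⊤

/-- The states `x` form a trajectory of the noise-free system `x_{t+1} = A x_t + B u_t` driven by
the inputs `u`. -/
def IsTrajectory (A : Module.End K E) (B : F →ₗ[K] E) (x : ℕ → E) (u : ℕ → F) : Prop :=
  ∀ t, x (t + 1) = A (x t) + B (u t)

/-- The invariant of the greedy construction. Here `V` is the span of the state-input pairs visited
so far and `x` is the current state: `V` is a product of a subspace of states and a subspace of
inputs, and the system maps `V` into the states of `V`, up to multiples of `x`. -/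
structure IsExplored (A : Module.End K E) (B : F →ₗ[K] E) (V : Submodule K (E × F)) (x : E) :
    Prop where
  fst_mem : ∀ p ∈ V, (p.1, 0) ∈ V
  exists_add_smul_mem : ∀ p ∈ V, ∃ c : K, (A p.1 + B p.2 + c • x, 0) ∈ V

variable {A : Module.End K E} {B : F →ₗ[K] E} {V : Submodule K (E × F)} {x : E}

theorem isExplored_bot (A : Module.End K E) (B : F →ₗ[K] E) (x : E) : IsExplored A B ⊥ x where
  fst_mem := by simp
  exists_add_smul_mem := by
    rintro p rfl
    exact ⟨0, by simp⟩

theorem IsExplored.sup_span_singleton (hV : IsExplored A B V x) {u : F}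
    (hx : (x, 0) ∈ V ⊔ K ∙ (x, u)) : IsExplored A B (V ⊔ K ∙ (x, u)) (A x + B u) where
  fst_mem p hp := by
    obtain ⟨q, hq, _, hr, rfl⟩ := Submodule.mem_sup.1 hp
    obtain ⟨a, rfl⟩ := Submodule.mem_span_singleton.1 hr
    simpa using add_mem (Submodule.mem_sup_left (hV.fst_mem q hq)) (Submodule.smul_mem _ a hx)
  exists_add_smul_mem p hp := by
    obtain ⟨q, hq, _, hr, rfl⟩ := Submodule.mem_sup.1 hp
    obtain ⟨a, rfl⟩ := Submodule.mem_span_singleton.1 hr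
    obtain ⟨c, hc⟩ := hV.exists_add_smul_mem q hq
    refine ⟨-a, ?_⟩
    convert sub_mem (Submodule.mem_sup_left hc) (Submodule.smul_mem _ c hx) using 1
    ext
    · simp
      abel
    · simp

theorem IsExplored.eq_top (hV : IsExplored A B V x) (hAB : IsControllablePair A B)
    (hx : ∀ u, (x, u) ∈ V) : V = ⊤ := by
  have zero_mem (u : F) : (0, u) ∈ V := by simpa using sub_mem (hx u) (hx 0)
  have next_mem {p : E × F} (hp : p ∈ V) : (A p.1 + B p.2, 0) ∈ V := by
    obtain ⟨c, hc⟩ := hV.exists_add_smul_mem p hp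
    simpa using sub_mem hc (V.smul_mem c (hx 0))
  have states_eq_top : V.comap (LinearMap.inl K E F) = ⊤ := by
    refine hAB _ (fun y hy => by simpa using next_mem hy) ?_
    rintro _ ⟨u, rfl⟩
    simpa using next_mem (zero_mem u)
  rw [eq_top_iff]
  rintro ⟨y, u⟩ -
  have hy : y ∈ V.comap (LinearMap.inl K E F) := states_eq_top ▸ Submodule.mem_top
  simpa using add_mem (Submodule.mem_comap.1 hy) (zero_mem u)

theorem IsExplored.exists_input_notMem (hV : IsExplored A B V x) (hAB : IsControllablePair A B)
    (htop : V ≠ ⊤) : ∃ u, (x, u) ∉ V ∧ (x, 0) ∈ V ⊔ K ∙ (x, u) := by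
  by_cases hx : (x, 0) ∈ V
  · obtain ⟨u, hu⟩ := not_forall.1 (mt (hV.eq_top hAB) htop)
    exact ⟨u, hu, Submodule.mem_sup_left hx⟩
  · exact ⟨0, hx, Submodule.mem_sup_right (Submodule.mem_span_singleton_self _)⟩

theorem exists_isTrajectory (A : Module.End K E) (B : F →ₗ[K] E) (x : E) (u : ℕ → F) :
    ∃ ξ : ℕ → E, ξ 0 = x ∧ IsTrajectory A B ξ u :=
  ⟨fun t => Nat.rec x (fun s y => A y + B (u s)) t, rfl, fun _ => rfl⟩

theorem IsTrajectory.cons {ξ : ℕ → E} {u : ℕ → F} (h : IsTrajectory A B ξ u) {v : F}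
    (h0 : ξ 0 = A x + B v) :
    IsTrajectory A B (fun t => Nat.casesOn t x ξ) (fun t => Nat.casesOn t v u)
  | 0 => h0
  | t + 1 => h t

theorem IsExplored.exists_isTrajectory_span_eq_top [FiniteDimensional K E] [FiniteDimensional K F]
    (hV : IsExplored A B V x) (hAB : IsControllablePair A B) (k : ℕ)
    (hk : Module.finrank K (E × F) ≤ Module.finrank K V + k) :
    ∃ (ξ : ℕ → E) (u : ℕ → F), ξ 0 = x ∧ IsTrajectory A B ξ u ∧
      V ⊔ Submodule.span K (Set.range fun t : Fin k => (ξ t, u t)) = ⊤ := by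
  induction k generalizing V x with
  | zero =>
    obtain ⟨ξ, hξ0, hξ⟩ := exists_isTrajectory A B x 0
    exact ⟨ξ, 0, hξ0, hξ, by simp [Submodule.eq_top_of_finrank_eq (V.finrank_le.antisymm hk)]⟩
  | succ k ih =>
    by_cases htop : V = ⊤
    · obtain ⟨ξ, hξ0, hξ⟩ := exists_isTrajectory A B x 0
      exact ⟨ξ, 0, hξ0, hξ, by simp [htop]⟩
    obtain ⟨v, hv, hxv⟩ := hV.exists_input_notMem hAB htop
    have hlt : V < V ⊔ K ∙ (x, v) := Submodule.lt_sup_iff_notMem.2 hv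
    have hfinrank := Submodule.finrank_lt_finrank_of_lt hlt
    obtain ⟨ξ, u, hξ0, hξ, hspan⟩ := ih (hV.sup_span_singleton hxv) (by lia)
    refine ⟨_, _, rfl, hξ.cons hξ0, ?_⟩
    rw [← hspan, sup_assoc, ← Submodule.span_union, Set.singleton_union, Fin.range_fin_succ]
    rfl

end GreedyInputs

section DataMatrix

variable {N M ℓ : ℕ} {Ab : Matrix (Fin N) (Fin N) ℝ} {Bb : Matrix (Fin N) (Fin M) ℝ}

theorem Controllable.isControllablePair (h : Controllable Ab Bb) :
    IsControllablePair Ab.mulVecLin Bb.mulVecLin := by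
  intro W hW hB
  have pow_mem (k : ℕ) (u : Fin M → ℝ) : (Ab ^ k * Bb) *ᵥ u ∈ W := by
    induction k with
    | zero => simpa using hB ⟨u, rfl⟩
    | succ k ih => simpa [pow_succ', Matrix.mul_assoc, mulVec_mulVec] using hW ih
  have span_cols_eq_top : Submodule.span ℝ (Set.range (ctrbMat Ab Bb).col) = ⊤ :=
    Submodule.eq_top_of_finrank_eq <| by
      rw [← rank_eq_finrank_span_cols, show (ctrbMat Ab Bb).rank = N from h]
      simp
  rw [eq_top_iff, ← span_cols_eq_top, Submodule.span_le]
  rintro _ ⟨⟨k, j⟩, rfl⟩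
  have hcol := pow_mem k (Pi.single j 1)
  rwa [mulVec_single_one] at hcol

theorem Controllable.add_le_length (h : Controllable Ab Bb)
    (hℓ : M * N ^ 2 + M * N + 2 * M + 2 < 2 * ℓ) : N + M ≤ ℓ := by
  have hrank := rank_le_card_width (ctrbMat Ab Bb)
  rw [show (ctrbMat Ab Bb).rank = N from h, Fintype.card_prod, Fintype.card_fin,
    Fintype.card_fin, mul_comm] at hrank
  have hsq : M * N ≤ M * N ^ 2 := Nat.mul_le_mul_left M (Nat.le_self_pow two_ne_zero N)
  lia

theorem trajEta_add (X X' : Fin N → ℝ) (U U' : ℕ → Fin M → ℝ) (η η' : ℕ → Fin N → ℝ) (t : ℕ) :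
    trajEta Ab Bb (X + X') (U + U') (η + η') t =
      trajEta Ab Bb X U η t + trajEta Ab Bb X' U' η' t := by
  induction t with
  | zero => rfl
  | succ t ih =>
    simp only [trajEta, ih, Pi.add_apply, mulVec_add]
    abel

theorem trajEta_smul (c : ℝ) (X : Fin N → ℝ) (U : ℕ → Fin M → ℝ) (η : ℕ → Fin N → ℝ) (t : ℕ) :
    trajEta Ab Bb (c • X) (c • U) (c • η) t = c • trajEta Ab Bb X U η t := by
  induction t with
  | zero => rfl
  | succ t ih => simp only [trajEta, ih, Pi.smul_apply, mulVec_smul, smul_add]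

theorem IsTrajectory.trajEta_eq {ξ : ℕ → Fin N → ℝ} {u : ℕ → Fin M → ℝ}
    (h : IsTrajectory Ab.mulVecLin Bb.mulVecLin ξ u) {U : ℕ → Fin M → ℝ} {t : ℕ}
    (hU : ∀ s < t, U s = u s) : trajEta Ab Bb (ξ 0) U 0 t = ξ t := by
  induction t with
  | zero => rfl
  | succ t ih =>
    rw [trajEta, ih fun s hs => hU s (by lia), hU t (by lia), h t]
    simp

/-- Extension of a finite sequence by zero, in the form in which it occurs in `Dmat`. -/
noncomputable def zeroExtend {E : Type*} [AddCommGroup E] [Module ℝ E] :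
    (Fin ℓ → E) →ₗ[ℝ] ℕ → E where
  toFun f t := if h : t < ℓ then f ⟨t, h⟩ else 0
  map_add' f g := by
    ext t
    by_cases h : t < ℓ <;> simp [h]
  map_smul' c f := by
    ext t
    by_cases h : t < ℓ <;> simp [h]

theorem zeroExtend_apply_of_lt {E : Type*} [AddCommGroup E] [Module ℝ E] (f : Fin ℓ → E) {t : ℕ}
    (h : t < ℓ) : zeroExtend f t = f ⟨t, h⟩ :=
  dif_pos h

theorem Dmat_eq_sumElim (X0 : Fin N → ℝ) (η : Fin ℓ → Fin N → ℝ) (U : Fin ℓ → Fin M → ℝ) :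
    Dmat Ab Bb X0 η U = of fun r c =>
      Sum.elim (trajEta Ab Bb X0 (zeroExtend U) (zeroExtend η) c.rev) (U c.rev) r :=
  rfl

/-- `D` as a linear function of the pair `((X₀, η), U)`. -/
noncomputable def dmatLinearMap (ℓ : ℕ) (Ab : Matrix (Fin N) (Fin N) ℝ)
    (Bb : Matrix (Fin N) (Fin M) ℝ) :
    ((Fin N → ℝ) × (Fin ℓ → Fin N → ℝ)) × (Fin ℓ → Fin M → ℝ) →ₗ[ℝ]
      Matrix (Fin N ⊕ Fin M) (Fin ℓ) ℝ where
  toFun p := Dmat Ab Bb p.1.1 p.1.2 p.2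
  map_add' p q := by
    ext (i | j) c <;> simp [Dmat_eq_sumElim, trajEta_add]
  map_smul' a p := by
    ext (i | j) c <;> simp [Dmat_eq_sumElim, trajEta_smul]

theorem IsTrajectory.rank_Dmat {ξ : ℕ → Fin N → ℝ} {u : ℕ → Fin M → ℝ}
    (h : IsTrajectory Ab.mulVecLin Bb.mulVecLin ξ u)
    (hspan : Submodule.span ℝ (Set.range fun t : Fin ℓ => (ξ t, u t)) = ⊤) :
    (Dmat Ab Bb (ξ 0) 0 fun t : Fin ℓ => u t).rank = N + M := by
  let e := LinearEquiv.sumArrowLequivProdArrow (Fin N) (Fin M) ℝ ℝ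
  have col_eq : (Dmat Ab Bb (ξ 0) 0 fun t : Fin ℓ => u t).col =
      (e.symm ∘ fun t : Fin ℓ => (ξ t, u t)) ∘ Fin.rev := by
    funext c
    have htraj := h.trajEta_eq (U := zeroExtend fun t : Fin ℓ => u t) (t := c.rev)
      fun s hs => zeroExtend_apply_of_lt _ (hs.trans c.rev.isLt)
    ext (i | j)
    · simpa [Dmat_eq_sumElim, e] using congrFun htraj i
    · simp [Dmat_eq_sumElim, e]
  have span_col_eq_top :
      Submodule.span ℝ (Set.range (Dmat Ab Bb (ξ 0) 0 fun t : Fin ℓ => u t).col) = ⊤ := by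
    rw [col_eq, Fin.rev_surjective.range_comp, Set.range_comp, ← LinearEquiv.coe_coe,
      Submodule.span_image, hspan, Submodule.map_top, LinearEquiv.range]
  rw [rank_eq_finrank_span_cols, span_col_eq_top]
  simp

theorem Controllable.exists_rank_Dmat_zero (h : Controllable Ab Bb) (hℓ : N + M ≤ ℓ) :
    ∃ U : Fin ℓ → Fin M → ℝ, (Dmat Ab Bb 0 0 U).rank = N + M := by
  obtain ⟨ξ, u, hξ0, hξ, hspan⟩ :=
    (isExplored_bot Ab.mulVecLin Bb.mulVecLin 0).exists_isTrajectory_span_eq_top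
      h.isControllablePair ℓ (by simpa using hℓ)
  rw [bot_sup_eq] at hspan
  exact ⟨fun t => u t, hξ0 ▸ hξ.rank_Dmat hspan⟩

theorem rank_Dmat_eq_iff (X0 : Fin N → ℝ) (η : Fin ℓ → Fin N → ℝ) (U : Fin ℓ → Fin M → ℝ) :
    (Dmat Ab Bb X0 η U).rank = N + M ↔
      (Dmat Ab Bb X0 η U * (Dmat Ab Bb X0 η U)ᵀ).det ≠ 0 := by
  rw [← rank_eq_card_iff_det_mul_transpose_ne_zero, Fintype.card_sum, Fintype.card_fin,
    Fintype.card_fin]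

theorem Controllable.exists_det_Dmat_ne_zero (h : Controllable Ab Bb) (hℓ : N + M ≤ ℓ)
    (X0 : Fin N → ℝ) (η : Fin ℓ → Fin N → ℝ) :
    ∃ U, (Dmat Ab Bb X0 η U * (Dmat Ab Bb X0 η U)ᵀ).det ≠ 0 := by
  obtain ⟨U, hU⟩ := h.exists_rank_Dmat_zero hℓ
  exact exists_det_mul_transpose_ne_zero_of_zero_fst (dmatLinearMap ℓ Ab Bb) (X0, η)
    ((rank_Dmat_eq_iff 0 0 U).1 hU)

theorem analyticOnNhd_det_Dmat (X0 : Fin N → ℝ) (η : Fin ℓ → Fin N → ℝ) :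
    AnalyticOnNhd ℝ (fun U => (Dmat Ab Bb X0 η U * (Dmat Ab Bb X0 η U)ᵀ).det) Set.univ :=
  fun U _ => (analyticOnNhd_det_mul_transpose (dmatLinearMap ℓ Ab Bb) ((X0, η), U) trivial).fun_comp
    (f := fun U => ((X0, η), U)) (by fun_prop)

end DataMatrix

theorem Dmat_full_rank_as_general {Ω : Type*} [MeasurableSpace Ω] {μ : Measure Ω} {N M ℓ : ℕ}
    (Ab : Matrix (Fin N) (Fin N) ℝ) (Bb : Matrix (Fin N) (Fin M) ℝ)
    (X0 : Fin N → ℝ) (η : Fin ℓ → Fin N → ℝ) (hctrb : Controllable Ab Bb) (hℓ : N + M ≤ ℓ)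
    (U : Ω → Fin ℓ → Fin M → ℝ) (hU : AEMeasurable U μ)
    (hac : μ.map U ≪ (volume : Measure (Fin ℓ → Fin M → ℝ))) :
    ∀ᵐ ω ∂μ, (Dmat Ab Bb X0 η (U ω)).rank = N + M ∧
      IsUnit (Dmat Ab Bb X0 η (U ω) * (Dmat Ab Bb X0 η (U ω))ᵀ) := by
  obtain ⟨U₀, hU₀⟩ := hctrb.exists_det_Dmat_ne_zero hℓ X0 η
  have hdet := ae_ne_zero_of_analyticOnNhd volume (analyticOnNhd_det_Dmat X0 η) hU₀
  filter_upwards [ae_of_ae_map hU (hac.ae_le hdet)] with ω hω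
  exact ⟨(rank_Dmat_eq_iff X0 η (U ω)).2 hω, (isUnit_iff_isUnit_det _).2 hω.isUnit⟩

/-- Let `N = n(n+1)/2`, `M = m(m+1)/2`, let `(Ă, B̆)` be controllable, let `X₀` and the
sequence `η_0, …, η_{ℓ-1}` be fixed, and suppose `ℓ ≥ (1/2)m²n⁴ + (1/2)m²n² + m² + 1`
and `ℓ > (1/2)MN² + (1/2)MN + M + 1` (both stated multiplied by `2`).  If the joint law of
the random inputs `U_0, …, U_{ℓ-1}` on `ℝ^{Mℓ}` is absolutely continuous with respect to
Lebesgue measure, then with probability one `D` has full row rank `N + M`, and consequently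
`D Dᵀ` is invertible with probability one. -/
theorem Dmat_full_rank_as {Ω : Type*} [MeasureSpace Ω]
    [IsProbabilityMeasure (volume : Measure Ω)] {n m N M ℓ : ℕ}
    (hN : 2 * N = n * (n + 1)) (hM : 2 * M = m * (m + 1))
    (Ab : Matrix (Fin N) (Fin N) ℝ) (Bb : Matrix (Fin N) (Fin M) ℝ)
    (X0 : Fin N → ℝ) (η : Fin ℓ → Fin N → ℝ)
    (hctrb : Controllable Ab Bb)
    (hℓ1 : 2 * ℓ ≥ m ^ 2 * n ^ 4 + m ^ 2 * n ^ 2 + 2 * m ^ 2 + 2)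
    (hℓ2 : 2 * ℓ > M * N ^ 2 + M * N + 2 * M + 2)
    (U : Ω → Fin ℓ → Fin M → ℝ) (hUmeas : Measurable U)
    (hac : Measure.map U volume ≪ (volume : Measure (Fin ℓ → Fin M → ℝ))) :
    ∀ᵐ ω, (Dmat Ab Bb X0 η (U ω)).rank = N + M ∧
      IsUnit (Dmat Ab Bb X0 η (U ω) * (Dmat Ab Bb X0 η (U ω))ᵀ) := by
  exact Dmat_full_rank_as_general Ab Bb X0 η hctrb (hctrb.add_le_length hℓ2) U
    hUmeas.aemeasurable hac
end
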